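/- Let S be a base scheme and Y a smooth affine S-scheme. Then Y → S satisfies the lifting property with respect to henselian affine pairs: for every henselian pair (X, Z) with X affine and every S-morphism g : Z → Y, there exists an S-morphism g' : X → Y with g'|_Z = g. -/

import Mathlib

/-!
The proof reduces smooth lifting to étale lifting, and étale lifting to the existence of roots of
monic polynomials, which is the definition of a henselian pair.

*From smooth to étale.* After base change, let `A = B[X] / J` be smooth over `B`. The splitting of
the conormal sequence gives `r i ∈ J` with `f ≡ ∑ (∂ᵢ f) rᵢ` modulo `J ^ 2` for `f ∈ J`
(`exists_conormal_splitting`); in particular `E = (∂ⱼ r k)` is a projector modulo `J`, namely the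
projector onto the conormal bundle of `Spec A` in affine space. For a lift `b` of the given point
to affine space over `B`, the system `F = r + (1 - E) (X - b)` has Jacobian matrix `1` at `b` and
vanishes at `b` modulo `I`. It defines a scheme étale over `B` near `b`, so it has a root
`c ≡ b` modulo `I`. The ideal `𝔧 = J (c)` is contained in `I`, and multiplying `F (c) = 0` by
`E (c)` shows `𝔧 = I 𝔧`, so `𝔧 = 0` by Nakayama and `c` is a point of `A`.

*Étale algebras.* Let `σ : T → B ⧸ I` be a point of an étale `B`-algebra. The separability
idempotent gives an element `ε` that isolates `σ` modulo `I`, and Zariski's main theorem gives a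
finite subalgebra `C` of `T` which agrees with `T` on an open cover. Multiplying `ε` by a suitable
element that is invertible at `σ` yields `b ∈ C` which modulo `I` acts on `C` with rank one and
eigenvalue `1`. Its characteristic polynomial is `(X - 1) X ^ s` modulo `I`, so the henselian
property provides a root lifting `1` and thereby an idempotent `e ∈ C` with `σ e = 1`
(`exists_idempotent_of_root`). By Nakayama `e T` is generated by `e` over `B`, and an étale quotient
of `B` by an ideal contained in `I` is `B` (`exists_lift_of_etale`).
-/

universe u

/-! ### Idempotents from henselian roots -/

section Idempotents

open Polynomial

lemma HenselianRing.isUnit_of_sub_one_mem {B : Type*} [CommRing B] (I : Ideal B) [HenselianRing B I]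
    {x : B} (h : x - 1 ∈ I) : IsUnit x := by
  have := isLocalHom_of_le_jacobson_bot I (HenselianRing.jac)
  refine IsUnit.of_map (Ideal.Quotient.mk I) x ?_
  rw [show Ideal.Quotient.mk I x = 1 from by
    rw [← map_one (Ideal.Quotient.mk I)]; exact Ideal.Quotient.eq.mpr h]
  exact isUnit_one

/-- A root `b` of a monic polynomial `f` over `B` for which `1` is a simple root modulo `I` splits
off an idempotent `e` on which `b` acts as the Hensel root `α` of `f`. If `f = (X - α) h`, then
`e = h(α)⁻¹ h(b)`. -/
lemma exists_idempotent_of_root {B T : Type*} [CommRing B] (I : Ideal B) [HenselianRing B I]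
    [CommRing T] [Algebra B T] (b : T) (f : B[X]) (hf : f.Monic) (hfb : aeval b f = 0)
    (h1 : f.eval 1 ∈ I) (h1' : f.derivative.eval 1 - 1 ∈ I) :
    ∃ e ∈ Algebra.adjoin B {b}, ∃ α : B, IsUnit α ∧ IsIdempotentElem e ∧ e * b = α • e ∧
      ∀ χ : T →ₐ[B] B ⧸ I, χ b = 1 → χ e = 1 := by
  have hu : Ideal.Quotient.mk I (f.derivative.eval 1) = 1 := by
    rw [← map_one (Ideal.Quotient.mk I)]; exact Ideal.Quotient.eq.mpr h1'
  obtain ⟨α, hα, hαI⟩ := HenselianRing.is_henselian f hf 1 h1 (by rw [hu]; exact isUnit_one)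
  have hα1 : Ideal.Quotient.mk I α = 1 := by
    rw [← map_one (Ideal.Quotient.mk I)]; exact Ideal.Quotient.eq.mpr hαI
  obtain ⟨h, rfl⟩ := dvd_iff_isRoot.mpr hα
  have hder : (derivative ((X - C α) * h)).eval α = h.eval α := by simp
  -- `α` and `1` agree modulo `I`, hence so do the values of any polynomial
  have key : ∀ p : B[X], Ideal.Quotient.mk I (p.eval α) = Ideal.Quotient.mk I (p.eval 1) := by
    intro p
    rw [← eval₂_at_apply, ← eval₂_at_apply, hα1, map_one]
  have hhα : Ideal.Quotient.mk I (h.eval α) = 1 := by rw [← hder, key, hu]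
  have hhu : IsUnit (h.eval α) := HenselianRing.isUnit_of_sub_one_mem I (by
    rw [← Ideal.Quotient.eq, hhα, map_one])
  obtain ⟨u, hu'⟩ := hhu
  have hb : aeval b h * b = α • aeval b h := by
    simp only [map_mul, map_sub, aeval_X, aeval_C] at hfb
    rw [Algebra.smul_def]
    linear_combination hfb
  -- `e T` is a `B[b]`-module on which `b` acts as `α`; apply this to `p = h` for idempotency
  have hp : ∀ p : B[X], aeval b h * aeval b p = p.eval α • aeval b h := by
    intro p
    induction p using Polynomial.induction_on' with
    | add p q hp hq => simp only [map_add, mul_add, hp, hq, eval_add, add_smul]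
    | monomial n a =>
      simp only [aeval_monomial, eval_monomial]
      induction n with
      | zero => simp [Algebra.smul_def, mul_comm]
      | succ n ih =>
        rw [pow_succ, ← mul_assoc (algebraMap B T a), ← mul_assoc, ih, smul_mul_assoc, hb,
          smul_smul, pow_succ, mul_assoc]
  refine ⟨(↑u⁻¹ : B) • aeval b h, Subalgebra.smul_mem _ (aeval_mem_adjoin_singleton B b) _, α,
    HenselianRing.isUnit_of_sub_one_mem I hαI, ?_, ?_, ?_⟩
  · rw [IsIdempotentElem, smul_mul_smul_comm, hp, smul_smul, mul_assoc, ← hu']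
    simp
  · rw [smul_mul_assoc, hb, smul_comm]
  · intro χ hχ
    have : χ (aeval b h) = Ideal.Quotient.mk I (h.eval α) := by
      rw [← aeval_algHom_apply, hχ, key, ← Ideal.Quotient.algebraMap_eq,
        ← map_one (algebraMap B (B ⧸ I)), aeval_algebraMap_apply]
      simp
    rw [map_smul, this, hhα, Algebra.smul_def, mul_one, Ideal.Quotient.algebraMap_eq]
    have h2 : Ideal.Quotient.mk I ((↑u⁻¹ : B) * u) = 1 := by simp
    rw [map_mul, hu', hhα, mul_one] at h2
    exact h2

lemma mem_smul_span_range {B M : Type*} [CommRing B] {I : Ideal B} [AddCommGroup M] [Module B M]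
    {ι : Type*} [Fintype ι] {v : ι → M} {x : M} :
    x ∈ I • Submodule.span B (Set.range v) ↔ ∃ l : ι → B, (∀ j, l j ∈ I) ∧ ∑ j, l j • v j = x := by
  rw [Submodule.mem_ideal_smul_span_iff_exists_sum]
  constructor
  · rintro ⟨a, ha, rfl⟩
    exact ⟨a, ha, by rw [Finsupp.sum_fintype _ _ (by simp)]⟩
  · rintro ⟨l, hl, rfl⟩
    exact ⟨Finsupp.equivFunOnFinite.symm l, hl, by
      rw [Finsupp.sum_fintype _ _ (by simp)]; simp⟩

/-- If, modulo `I`, multiplication by `b` on the module generated by `1` and the `v i` maps `1` to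
`1` plus a combination of the `v i` and kills the `v i`, then its matrix has characteristic
polynomial congruent to `(X - 1) X ^ s`, so `b` satisfies the hypotheses of
`exists_idempotent_of_root`. -/
lemma exists_poly_of_rank_one {B T : Type*} [CommRing B] (I : Ideal B)
    [CommRing T] [Algebra B T] {ι : Type*} [Fintype ι] (v : ι → T) (b : T)
    (hb : b - 1 ∈ I • Submodule.span B {(1 : T)} ⊔ Submodule.span B (Set.range v))
    (hv : ∀ i, b * v i ∈ I • (Submodule.span B {(1 : T)} ⊔ Submodule.span B (Set.range v))) :
    ∃ f : B[X], f.Monic ∧ aeval b f = 0 ∧ f.eval 1 ∈ I ∧ f.derivative.eval 1 - 1 ∈ I := by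
  classical
  have hb' : ∃ a ∈ I, ∃ l : ι → B, b = (1 + a) • (1 : T) + ∑ j, l j • v j := by
    obtain ⟨x, hx, y, hy, hxy⟩ := Submodule.mem_sup.mp hb
    obtain ⟨a, ha, rfl⟩ := Submodule.mem_smul_span_singleton.mp hx
    obtain ⟨l, rfl⟩ := (Submodule.mem_span_range_iff_exists_fun B).mp hy
    refine ⟨a, ha, l, ?_⟩
    rw [add_smul, one_smul]
    linear_combination -hxy
  have hv' : ∀ i, ∃ a ∈ I, ∃ l : ι → B, (∀ j, l j ∈ I) ∧
      b * v i = a • (1 : T) + ∑ j, l j • v j := by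
    intro i
    have := hv i
    rw [Submodule.smul_sup] at this
    obtain ⟨x, hx, y, hy, hxy⟩ := Submodule.mem_sup.mp this
    obtain ⟨a, ha, rfl⟩ := Submodule.mem_smul_span_singleton.mp hx
    obtain ⟨l, hl, rfl⟩ := mem_smul_span_range.mp hy
    exact ⟨a, ha, l, hl, hxy.symm⟩
  obtain ⟨a, ha, l, hl⟩ := hb'
  choose m hm n hn hmn using hv'
  let M : Matrix (Unit ⊕ ι) (Unit ⊕ ι) B :=
    Matrix.fromBlocks (Matrix.of fun _ _ ↦ 1 + a) (Matrix.of fun _ j ↦ l j)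
      (Matrix.of fun i _ ↦ m i) (Matrix.of n)
  let w : Unit ⊕ ι → T := Sum.elim (fun _ ↦ 1) v
  have hw : ∀ i, b * w i = ∑ j, M i j • w j := by
    rintro (i | i)
    · simp [M, w, ← hl]
    · simp [M, w, hmn]
  let N : Matrix (Unit ⊕ ι) (Unit ⊕ ι) T := M.charmatrix.map (aeval b)
  have hN : N.mulVec w = 0 := by
    ext i
    simp only [N, Matrix.mulVec, dotProduct, Matrix.map_apply, Matrix.charmatrix_apply, map_sub,
      sub_mul, Finset.sum_sub_distrib, aeval_C, Matrix.diagonal_apply]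
    simp [apply_ite (aeval b), ← Algebra.smul_def, hw]
  -- Cayley–Hamilton: `det N` kills `w`, whose first entry is `1`
  have hdet : N.det = 0 := by
    have : (N.adjugate * N).mulVec w = 0 := by
      rw [← Matrix.mulVec_mulVec, hN, Matrix.mulVec_zero]
    rw [Matrix.adjugate_mul, Matrix.smul_mulVec, Matrix.one_mulVec] at this
    simpa [w] using congrFun this (Sum.inl ())
  have hmap : M.charpoly.map (Ideal.Quotient.mk I) = (X - 1) * X ^ Fintype.card ι := by
    rw [← Matrix.charpoly_map, show M.map (Ideal.Quotient.mk I) =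
      Matrix.fromBlocks 1 (Matrix.of fun _ j ↦ Ideal.Quotient.mk I (l j)) 0 0 from ?_,
      Matrix.charpoly_fromBlocks_zero₂₁, Matrix.charpoly_one, Matrix.charpoly_zero]
    · simp
    · ext (i | i) (j | j)
      · simp [M, Ideal.Quotient.eq_zero_iff_mem.mpr ha]
      · simp [M]
      · simp [M, Ideal.Quotient.eq_zero_iff_mem.mpr (hm i)]
      · simp [M, Ideal.Quotient.eq_zero_iff_mem.mpr (hn i j)]
  refine ⟨M.charpoly, M.charpoly_monic, ?_, ?_, ?_⟩
  · rw [← hdet, Matrix.charpoly]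
    exact AlgHom.map_det (aeval b) _
  · rw [← Ideal.Quotient.eq_zero_iff_mem, ← eval₂_at_apply, ← eval_map, hmap]
    simp
  · rw [← Ideal.Quotient.eq, ← eval₂_at_apply, ← eval_map, ← derivative_map, hmap]
    simp
open TensorProduct

end Idempotents

open TensorProduct

/-! ### Étale algebras over henselian pairs -/

/-- For an unramified algebra the kernel of a point `σ` with values in `B ⧸ I` is generated modulo
`I` by an idempotent. The complementary idempotent `ε` is the image of the separability idempotent
`elem B T ∈ T ⊗ T` under evaluation of the second factor at `σ`. -/
lemma exists_separating_element {B T : Type*} [CommRing B] [CommRing T] [Algebra B T]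
    [Algebra.FormallyUnramified B T] [Algebra.EssFiniteType B T] (I : Ideal B)
    (σ : T →ₐ[B] B ⧸ I) :
    ∃ ε : T, σ ε = 1 ∧ ∀ s, σ s = 0 → ε * s ∈ I.map (algebraMap B T) := by
  let J := I.map (algebraMap B T)
  let ι : B ⧸ I →ₐ[B] T ⧸ J := Ideal.Quotient.liftₐ I (Algebra.ofId B (T ⧸ J)) (by
    intro a ha
    exact Ideal.Quotient.eq_zero_iff_mem.mpr (Ideal.mem_map_of_mem _ ha))
  have hJ : ∀ a ∈ J, σ a = 0 := by
    have : J ≤ RingHom.ker σ := by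
      rw [Ideal.map_le_iff_le_comap]
      intro x hx
      rw [Ideal.mem_comap, RingHom.mem_ker, AlgHom.commutes]
      exact Ideal.Quotient.eq_zero_iff_mem.mpr hx
    exact fun a ha ↦ this ha
  let σ' : T ⧸ J →ₐ[B] B ⧸ I := Ideal.Quotient.liftₐ J σ hJ
  let ψ : T ⊗[B] T →ₐ[B] T ⧸ J :=
    Algebra.TensorProduct.lift (Ideal.Quotient.mkₐ B J) (ι.comp σ) (fun _ _ ↦ Commute.all _ _)
  have hψ : σ'.comp ψ = σ.comp (Algebra.TensorProduct.lmul' B) := by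
    ext x
    · simp only [AlgHom.comp_apply, ψ, σ']
      simp
      rfl
    · have : σ'.comp ι = AlgHom.id B _ := by
        ext y
        obtain ⟨y, rfl⟩ := Ideal.Quotient.mk_surjective y
        exact (σ'.comp ι).commutes y
      have := DFunLike.congr_fun this (σ x)
      simpa [σ', ψ] using this
  obtain ⟨ε, hε⟩ := Ideal.Quotient.mk_surjective (ψ (Algebra.FormallyUnramified.elem B T))
  refine ⟨ε, ?_, fun s hs ↦ ?_⟩
  · have := DFunLike.congr_fun hψ (Algebra.FormallyUnramified.elem B T)
    simp only [AlgHom.comp_apply, Algebra.FormallyUnramified.lmul_elem, ← hε, map_one] at this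
    exact this
  · have := congrArg ψ (Algebra.FormallyUnramified.one_tmul_sub_tmul_one_mul_elem (R := B) s)
    rw [map_mul, ← hε, map_sub, map_zero] at this
    rw [← Ideal.Quotient.eq_zero_iff_mem, map_mul]
    simpa [ψ, hs, mul_comm] using this

/-- Zariski's main theorem, in a global form for an unramified algebra `T`: there are finitely many
integral elements `r`, generating the unit ideal, such that `T` and the integral closure of `B` in
`T` become equal after inverting `r`. -/
lemma exists_zmt_elements {B T : Type*} [CommRing B] [CommRing T] [Algebra B T]
    [Algebra.FormallyUnramified B T] [Algebra.FiniteType B T] :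
    ∃ s : Finset T, Ideal.span (s : Set T) = ⊤ ∧
      ∀ r ∈ s, IsIntegral B r ∧ ∀ x : T, ∃ m, IsIntegral B (r ^ m * x) := by
  have h : Ideal.span {r : T | IsIntegral B r ∧ ∀ x : T, ∃ m, IsIntegral B (r ^ m * x)} = ⊤ := by
    by_contra hne
    obtain ⟨p, hp, hle⟩ := Ideal.exists_le_maximal _ hne
    have := hp.isPrime
    obtain ⟨r, hr, h1⟩ := Algebra.zariskisMainProperty_iff.mp
      (Algebra.ZariskisMainProperty.of_finiteType (R := B) p)
    exact hr (hle (Ideal.subset_span h1))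
  obtain ⟨s, hs, hs'⟩ := (Ideal.span_eq_top_iff_finite _).mp h
  exact ⟨s, hs', fun r hr ↦ hs hr⟩

/-- A finite subalgebra `C` of `T` that contains the `r i` and coincides with `T` away from the zero
locus of each `r i`. -/
lemma exists_finite_subalgebra {B T : Type*} [CommRing B] [CommRing T] [Algebra B T]
    [Algebra.FiniteType B T] {ι : Type*} [Finite ι] (r : ι → T) (hr : ∀ i, IsIntegral B (r i))
    (hr' : ∀ i, ∀ x : T, ∃ m, IsIntegral B (r i ^ m * x)) :
    ∃ C : Subalgebra B T, (Subalgebra.toSubmodule C).FG ∧ (∀ i, r i ∈ C) ∧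
      ∀ i t, ∀ᶠ k in Filter.atTop, r i ^ k * t ∈ C := by
  choose m hm using hr'
  obtain ⟨G, hG⟩ := (inferInstance : Algebra.FiniteType B T).out
  let S : Set T := Set.range r ∪ Set.range fun p : ι × G ↦ r p.1 ^ m p.1 p.2 * p.2
  have hrS : ∀ i, r i ∈ Algebra.adjoin B S := fun i ↦ Algebra.subset_adjoin (.inl ⟨i, rfl⟩)
  refine ⟨Algebra.adjoin B S, fg_adjoin_of_finite ?_ ?_, hrS, fun i t ↦ ?_⟩
  · exact (Set.finite_range _).union (Set.finite_range _)
  · rintro _ (⟨i, rfl⟩ | ⟨p, rfl⟩)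
    exacts [hr i, hm _ _]
  · have ht : t ∈ Algebra.adjoin B (G : Set T) := hG ▸ Algebra.mem_top
    induction ht using Algebra.adjoin_induction with
    | mem x hx =>
      filter_upwards [Filter.eventually_ge_atTop (m i x)] with k hk
      rw [← Nat.sub_add_cancel hk, pow_add, mul_assoc]
      exact mul_mem (pow_mem (hrS i) _) (Algebra.subset_adjoin (.inr ⟨(i, ⟨x, hx⟩), rfl⟩))
    | algebraMap b => exact .of_forall fun k ↦ mul_mem (pow_mem (hrS i) _) (algebraMap_mem _ _)
    | add x y _ _ hx hy =>
      filter_upwards [hx, hy] with k hx hy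
      rw [mul_add]
      exact add_mem hx hy
    | mul x y _ _ hx hy =>
      obtain ⟨p, hp⟩ := Filter.eventually_atTop.mp hx
      obtain ⟨q, hq⟩ := Filter.eventually_atTop.mp hy
      filter_upwards [Filter.eventually_ge_atTop (p + q)] with k hk
      have : r i ^ k * (x * y) = r i ^ p * x * (r i ^ (k - p) * y) := by
        rw [← Nat.add_sub_of_le (show p ≤ k by lia), pow_add, Nat.add_sub_cancel_left]
        ring
      rw [this]
      exact mul_mem (hp _ le_rfl) (hq _ (by lia))

lemma eventually_pow_mul_mem_smul {B T : Type*} [CommRing B] [CommRing T] [Algebra B T]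
    (I : Ideal B) (C : Submodule B T) {r : T} (h : ∀ t, ∀ᶠ k in Filter.atTop, r ^ k * t ∈ C)
    {y : T} (hy : y ∈ I.map (algebraMap B T)) :
    ∀ᶠ k in Filter.atTop, r ^ k * y ∈ I • C := by
  have hy' : y ∈ I • (⊤ : Submodule B T) := by rw [Ideal.smul_top_eq_map]; exact hy
  clear hy
  induction hy' using Submodule.smul_induction_on' with
  | smul a ha t _ =>
    filter_upwards [h t] with k hk
    rw [mul_smul_comm]
    exact Submodule.smul_mem_smul ha hk
  | add x hx y hy hx' hy' =>
    filter_upwards [hx', hy'] with k hx hy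
    rw [mul_add]
    exact add_mem hx hy

lemma exists_sum_mul_pow_eq_one {R ι : Type*} [CommRing R] [Fintype ι] {r : ι → R}
    (hr : Ideal.span (Set.range r) = ⊤) (N : ℕ) : ∃ u : ι → R, ∑ i, u i * r i ^ N = 1 := by
  have h := Ideal.span_pow_eq_top _ hr N
  rw [← Set.range_comp] at h
  exact Ideal.mem_span_range_iff_exists_fun.mp ((Ideal.eq_top_iff_one _).mp h)

/-- A point `σ` of an unramified algebra `T` with values in `B ⧸ I` lies on an open and closed
piece `e T` of `T` that is cyclic as a `B`-module. -/
lemma exists_idempotent_isolating {B T : Type*} [CommRing B] [CommRing T] [Algebra B T]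
    (I : Ideal B) [HenselianRing B I] [Algebra.FormallyUnramified B T] [Algebra.FiniteType B T]
    (σ : T →ₐ[B] B ⧸ I) :
    ∃ e : T, IsIdempotentElem e ∧ σ e = 1 ∧ ∀ t, ∃ c : B, e * t = c • e := by
  obtain ⟨ε, hε, hεI⟩ := exists_separating_element I σ
  obtain ⟨s, hs, hs'⟩ := exists_zmt_elements (B := B) (T := T)
  let r : s → T := (↑)
  have hrtop : Ideal.span (Set.range r) = ⊤ := by simpa [r] using hs
  obtain ⟨C, hC, hrC, hCk⟩ := exists_finite_subalgebra (B := B) r (fun i ↦ (hs' i i.2).1)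
    (fun i ↦ (hs' i i.2).2)
  obtain ⟨n, c, hc⟩ := Submodule.fg_iff_exists_fin_generating_family.mp hC
  have hsurj : Function.Surjective (algebraMap B (B ⧸ I)) := Ideal.Quotient.mk_surjective
  choose β hβ using fun j ↦ hsurj (σ (c j))
  let v : Fin n → T := fun j ↦ c j - algebraMap B T (β j)
  have hcC : ∀ j, c j ∈ C := fun j ↦ by
    rw [← Subalgebra.mem_toSubmodule, ← hc]; exact Submodule.subset_span ⟨j, rfl⟩
  have hvC : ∀ j, v j ∈ C := fun j ↦ sub_mem (hcC j) (algebraMap_mem _ _)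
  have hσv : ∀ j, σ (v j) = 0 := fun j ↦ by
    rw [map_sub, AlgHom.commutes, hβ, sub_self]
  have hCv : Subalgebra.toSubmodule C =
      Submodule.span B {(1 : T)} ⊔ Submodule.span B (Set.range v) := by
    apply le_antisymm
    · rw [← hc, Submodule.span_le]
      rintro _ ⟨j, rfl⟩
      rw [show c j = β j • (1 : T) + v j by simp [v, Algebra.smul_def]]
      exact add_mem (Submodule.mem_sup_left
        (Submodule.smul_mem _ _ (Submodule.mem_span_singleton_self _)))
        (Submodule.mem_sup_right (Submodule.subset_span ⟨j, rfl⟩))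
    · rw [sup_le_iff, Submodule.span_le, Submodule.span_le]
      constructor
      · rintro _ rfl
        exact one_mem C
      · rintro _ ⟨j, rfl⟩
        exact hvC j
  have hCI : ∀ x ∈ C, σ x = 0 →
      x ∈ I • Submodule.span B {(1 : T)} ⊔ Submodule.span B (Set.range v) := by
    intro x hx hσx
    rw [← Subalgebra.mem_toSubmodule, hCv] at hx
    obtain ⟨y, hy, z, hz, rfl⟩ := Submodule.mem_sup.mp hx
    obtain ⟨a, rfl⟩ := Submodule.mem_span_singleton.mp hy
    have hσz : σ z = 0 := by
      obtain ⟨l, rfl⟩ := (Submodule.mem_span_range_iff_exists_fun B).mp hz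
      simp [hσv]
    have ha : a ∈ I := by
      rw [map_add, hσz, add_zero, map_smul, map_one, Algebra.smul_def, mul_one] at hσx
      exact Ideal.Quotient.eq_zero_iff_mem.mp hσx
    exact add_mem (Submodule.mem_sup_left
      (Submodule.smul_mem_smul ha (Submodule.mem_span_singleton_self _)))
      (Submodule.mem_sup_right hz)
  -- one exponent works for all of the finitely many conditions
  obtain ⟨N, hN1, hN2⟩ : ∃ N, (∀ i, r i ^ N * ε ∈ C) ∧
      ∀ i j, r i ^ N * (ε * v j) ∈ I • Subalgebra.toSubmodule C := by
    refine (Filter.Eventually.and ?_ ?_ : ∀ᶠ N in Filter.atTop, _ ∧ _).exists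
    · exact Filter.eventually_all.mpr fun i ↦ hCk i ε
    · exact Filter.eventually_all.mpr fun i ↦ Filter.eventually_all.mpr fun j ↦
        eventually_pow_mul_mem_smul I _ (hCk i) (hεI _ (hσv j))
  -- the coefficients of `1 = ∑ u i * r i ^ N` may lie outside `C`, but since only the value
  -- at `σ` matters they can be replaced by elements of `B`
  obtain ⟨u, hu⟩ := exists_sum_mul_pow_eq_one hrtop N
  choose b hb using fun i ↦ hsurj (σ (u i))
  let b₀ : T := ∑ i, b i • (r i ^ N * ε)
  have hb₀C : b₀ ∈ C := sum_mem fun i _ ↦ C.smul_mem (hN1 i) _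
  have hσb₀ : σ b₀ = 1 := by
    have := congrArg σ hu
    simp only [map_sum, map_mul, map_pow, map_one, ← hb] at this
    simpa only [b₀, map_sum, map_mul, map_pow, Algebra.smul_def, AlgHom.commutes, hε, mul_one]
      using this
  have hb₀v : ∀ j, b₀ * v j ∈ I • Subalgebra.toSubmodule C := fun j ↦ by
    simp only [b₀, Finset.sum_mul, smul_mul_assoc, mul_assoc]
    exact sum_mem fun i _ ↦ Submodule.smul_mem _ _ (hN2 i j)
  obtain ⟨f, hf, hfb, hf1, hf1'⟩ := exists_poly_of_rank_one I v b₀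
    (hCI _ (sub_mem hb₀C (one_mem C)) (by rw [map_sub, hσb₀, map_one, sub_self]))
    (fun j ↦ hCv ▸ hb₀v j)
  obtain ⟨e, heb, α, hα, he, heα, hχ⟩ := exists_idempotent_of_root I b₀ f hf hfb hf1 hf1'
  have hσe : σ e = 1 := hχ σ hσb₀
  have heC : e ∈ C := Algebra.adjoin_le (Set.singleton_subset_iff.mpr hb₀C) heb
  -- Nakayama: `e C` is generated by `e`
  have heCe : ∀ x ∈ C, ∃ a : B, e * x = a • e := by
    let E := (Subalgebra.toSubmodule C).map (LinearMap.mulLeft B e)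
    have hE : E ≤ Submodule.span B {e} := by
      refine Submodule.le_of_le_smul_of_le_jacobson_bot (hC.map _)
        (HenselianRing.jac (I := I)) ?_
      rintro _ ⟨x, hx, rfl⟩
      have hx' := hCv.le hx
      obtain ⟨y, hy, z, hz, rfl⟩ := Submodule.mem_sup.mp hx'
      obtain ⟨a, rfl⟩ := Submodule.mem_span_singleton.mp hy
      obtain ⟨l, rfl⟩ := (Submodule.mem_span_range_iff_exists_fun B).mp hz
      rw [map_add]
      refine add_mem (Submodule.mem_sup_left ?_) (Submodule.mem_sup_right ?_)
      · simpa using Submodule.smul_mem _ a (Submodule.mem_span_singleton_self e)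
      · rw [map_sum]
        refine sum_mem fun j _ ↦ ?_
        rw [map_smul]
        refine Submodule.smul_mem _ _ ?_
        obtain ⟨α, rfl⟩ := hα
        have : LinearMap.mulLeft B e (v j) =
            (↑α⁻¹ : B) • LinearMap.mulLeft B e (b₀ * v j) := by
          simp only [LinearMap.mulLeft_apply]
          rw [← mul_assoc, heα, smul_mul_assoc, smul_smul, Units.inv_mul, one_smul]
        rw [this]
        refine Submodule.smul_mem _ _ ?_
        rw [← Submodule.map_smul'']
        exact Submodule.mem_map_of_mem (hb₀v j)
    intro x hx
    obtain ⟨a, ha⟩ := Submodule.mem_span_singleton.mp (hE ⟨x, hx, rfl⟩)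
    exact ⟨a, ha.symm⟩
  refine ⟨e, he, hσe, fun t ↦ ?_⟩
  -- `r i` acts on `e` as `ρ i ∈ B`, and the `ρ i` generate the unit ideal of `B`, so `e C = e T`
  choose ρ hρ using fun i ↦ heCe _ (hrC i)
  have hσr : ∀ i, σ (r i) = algebraMap B _ (ρ i) := fun i ↦ by
    simpa [hσe, Algebra.smul_def] using congrArg σ (hρ i)
  have hρtop : Ideal.span (Set.range ρ) = ⊤ := by
    obtain ⟨w, hw⟩ := Ideal.mem_span_range_iff_exists_fun.mp ((Ideal.eq_top_iff_one _).mp hrtop)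
    choose τ hτ using fun i ↦ hsurj (σ (w i))
    refine Ideal.eq_top_of_isUnit_mem _ (x := ∑ i, τ i * ρ i)
      (sum_mem fun i _ ↦ Ideal.mul_mem_left _ _ (Ideal.subset_span ⟨i, rfl⟩)) ?_
    refine HenselianRing.isUnit_of_sub_one_mem I (Ideal.Quotient.eq.mp ?_)
    have := congrArg σ hw
    rw [map_one, ← Ideal.Quotient.algebraMap_eq]
    simpa [hσr, ← hτ] using this
  obtain ⟨N, hN⟩ : ∃ N, ∀ i, r i ^ N * t ∈ C :=
    (Filter.eventually_all.mpr fun i ↦ hCk i t).exists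
  obtain ⟨d, hd⟩ := exists_sum_mul_pow_eq_one hρtop N
  choose μ hμ using fun i ↦ heCe _ (hN i)
  have hpow : ∀ i k, e * r i ^ k = ρ i ^ k • e := fun i k ↦ by
    induction k with
    | zero => simp
    | succ k ih => rw [pow_succ, ← mul_assoc, ih, smul_mul_assoc, hρ, smul_smul, pow_succ]
  refine ⟨∑ i, d i * μ i, ?_⟩
  calc e * t = (∑ i, d i * ρ i ^ N) • (e * t) := by rw [hd, one_smul]
    _ = ∑ i, d i • (e * (r i ^ N * t)) := by
      rw [Finset.sum_smul]
      refine Finset.sum_congr rfl fun i _ ↦ ?_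
      rw [mul_smul, ← smul_mul_assoc (ρ i ^ N), ← hpow, mul_assoc]
    _ = _ := by simp only [hμ, Finset.sum_smul, mul_smul]

/-- Étale algebras have the lifting property: the piece of `T` containing `σ` is both étale over `B`
and a quotient of `B` by an ideal contained in `I`, so it is `B` itself. -/
lemma exists_lift_of_etale {B T : Type*} [CommRing B] [CommRing T] [Algebra B T]
    (I : Ideal B) [HenselianRing B I] [Algebra.Etale B T] (σ : T →ₐ[B] B ⧸ I) :
    ∃ τ : T →ₐ[B] B, ∀ t, Ideal.Quotient.mk I (τ t) = σ t := by
  obtain ⟨e, he, hσe, het⟩ := exists_idempotent_isolating I σ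
  let T' := Localization.Away e
  have h1 : algebraMap T T' e = 1 := by
    have hu : IsUnit (algebraMap T T' e) := IsLocalization.Away.algebraMap_isUnit e
    exact hu.mul_left_cancel (by rw [← map_mul, he, mul_one])
  have hsurj : Function.Surjective (algebraMap B T') := by
    intro x
    obtain ⟨t, rfl⟩ := IsLocalization.Away.algebraMap_surjective_of_isIdempotentElem e he x
    obtain ⟨c, hc⟩ := het t
    refine ⟨c, ?_⟩
    have := congrArg (algebraMap T T') hc
    rw [map_mul, h1, one_mul, Algebra.smul_def, map_mul, h1, mul_one,
      ← IsScalarTower.algebraMap_apply] at this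
    exact this.symm
  let χ : T' →+* B ⧸ I := IsLocalization.Away.lift e (g := (σ : T →+* B ⧸ I))
    (by simp [hσe])
  have hχ : ∀ t, χ (algebraMap T T' t) = σ t := fun t ↦ IsLocalization.Away.lift_eq ..
  have hχB : ∀ b, χ (algebraMap B T' b) = Ideal.Quotient.mk I b := fun b ↦ by
    rw [IsScalarTower.algebraMap_apply B T T', hχ, AlgHom.commutes]
    rfl
  -- the kernel is idempotent because `B → T'` is étale, so Nakayama applies
  have hker : RingHom.ker (algebraMap B T') = ⊥ := by
    refine Submodule.eq_bot_of_le_smul_of_le_jacobson_bot I _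
      (Algebra.FinitePresentation.ker_fG_of_surjective (Algebra.ofId B T') hsurj) ?_
      HenselianRing.jac
    have hid := (Algebra.FormallyEtale.iff_of_surjective hsurj).mp inferInstance
    have hle : RingHom.ker (algebraMap B T') ≤ I := fun b hb ↦ by
      rw [← Ideal.Quotient.eq_zero_iff_mem, ← hχB, RingHom.mem_ker.mp hb, map_zero]
    calc _ = RingHom.ker (algebraMap B T') * RingHom.ker (algebraMap B T') := hid.symm
      _ ≤ _ := Ideal.mul_mono_left hle
  let φ : B ≃ₐ[B] T' := AlgEquiv.ofBijective (Algebra.ofId B T')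
    ⟨(RingHom.injective_iff_ker_eq_bot _).mpr hker, hsurj⟩
  refine ⟨φ.symm.toAlgHom.comp (IsScalarTower.toAlgHom B T T'), fun t ↦ ?_⟩
  rw [← hχB, ← hχ]
  congr 1
  exact φ.apply_symm_apply (algebraMap T T' t)

/-! ### Hensel's lemma in several variables -/

open MvPolynomial in
lemma etale_localization_jacobian {B ι : Type*} [CommRing B] [Fintype ι] [DecidableEq ι]
    (F : ι → MvPolynomial ι B) :
    Algebra.Etale B (Localization.Away (Ideal.Quotient.mk (Ideal.span (Set.range F))
      (Matrix.of fun i j ↦ pderiv i (F j)).det)) := by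
  let d := Ideal.Quotient.mk (Ideal.span (Set.range F)) (Matrix.of fun i j ↦ pderiv i (F j)).det
  let P₀ := Algebra.PreSubmersivePresentation.naive (v := F) id Function.injective_id
  let P₁ := Algebra.PreSubmersivePresentation.localizationAway (Localization.Away d) d
  have hP₀ : P₀.jacobian = d := by
    rw [Algebra.PreSubmersivePresentation.jacobian_eq_jacobiMatrix_det]
    have : P₀.jacobiMatrix = Matrix.of fun i j ↦ pderiv i (F j) := by
      ext1 i j
      exact Algebra.PreSubmersivePresentation.jacobiMatrix_naive ..
    rw [this]
    rfl
  let P : Algebra.SubmersivePresentation B (Localization.Away d) (Unit ⊕ ι) (Unit ⊕ ι) :=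
    { P₁.comp P₀ with
      jacobian_isUnit := by
        have hd : IsUnit (algebraMap _ (Localization.Away d) d) :=
          IsLocalization.Away.algebraMap_isUnit d
        rw [Algebra.PreSubmersivePresentation.comp_jacobian_eq_jacobian_smul_jacobian, hP₀,
          Algebra.PreSubmersivePresentation.localizationAway_jacobian, Algebra.smul_def]
        exact hd.mul hd }
  have : Algebra.IsStandardSmoothOfRelativeDimension 0 B (Localization.Away d) :=
    P.isStandardSmoothOfRelativeDimension (by simp [Algebra.Presentation.dimension])
  infer_instance

open MvPolynomial in
/-- Hensel's lemma in several variables for a henselian pair. -/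
lemma exists_root_of_isUnit_jacobian {B ι : Type*} [CommRing B] [Fintype ι] [DecidableEq ι]
    (I : Ideal B) [HenselianRing B I] (F : ι → MvPolynomial ι B) (b : ι → B)
    (hF : ∀ i, eval b (F i) ∈ I)
    (hd : IsUnit (eval b (Matrix.of fun i j ↦ pderiv i (F j)).det)) :
    ∃ c : ι → B, (∀ i, Ideal.Quotient.mk I (c i) = Ideal.Quotient.mk I (b i)) ∧
      ∀ i, eval c (F i) = 0 := by
  have := etale_localization_jacobian F
  set D := (Matrix.of fun i j ↦ pderiv i (F j)).det
  let S := MvPolynomial ι B ⧸ Ideal.span (Set.range F)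
  let d : S := Ideal.Quotient.mk _ D
  let T := Localization.Away d
  let ev : MvPolynomial ι B →ₐ[B] B ⧸ I := (Ideal.Quotient.mkₐ B I).comp (aeval b)
  have hev : ∀ a ∈ Ideal.span (Set.range F), ev a = 0 := by
    have : Ideal.span (Set.range F) ≤ RingHom.ker ev := by
      rw [Ideal.span_le]
      rintro _ ⟨i, rfl⟩
      exact Ideal.Quotient.eq_zero_iff_mem.mpr (by simpa [aeval_eq_eval] using hF i)
    exact fun a ha ↦ this ha
  let χ : S →ₐ[B] B ⧸ I := Ideal.Quotient.liftₐ _ ev hev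
  have hχ : ∀ y : Submonoid.powers d, IsUnit (χ y) := by
    rintro ⟨_, k, rfl⟩
    rw [map_pow]
    refine IsUnit.pow _ ?_
    have : χ d = Ideal.Quotient.mk I (eval b D) := by
      rw [← aeval_eq_eval]; rfl
    rw [this]
    exact hd.map _
  let σ : T →ₐ[B] B ⧸ I := IsLocalization.liftAlgHom (M := Submonoid.powers d) (f := χ) hχ
  obtain ⟨τ, hτ⟩ := exists_lift_of_etale I σ
  let q : MvPolynomial ι B →ₐ[B] B :=
    (τ.comp (IsScalarTower.toAlgHom B S T)).comp (Ideal.Quotient.mkₐ B _)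
  have hq : q = aeval fun i ↦ q (X i) := by ext; simp
  refine ⟨fun i ↦ q (X i), fun i ↦ ?_, fun i ↦ ?_⟩
  · have : σ (algebraMap S T (Ideal.Quotient.mk _ (X i))) = χ (Ideal.Quotient.mk _ (X i)) :=
      IsLocalization.lift_eq ..
    refine (hτ _).trans (this.trans ?_)
    exact congrArg (Ideal.Quotient.mk I) (aeval_X b i)
  · rw [← aeval_eq_eval]
    refine (DFunLike.congr_fun hq (F i)).symm.trans ?_
    have : Ideal.Quotient.mk (Ideal.span (Set.range F)) (F i) = 0 :=
      Ideal.Quotient.eq_zero_iff_mem.mpr (Ideal.subset_span ⟨i, rfl⟩)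
    change τ (algebraMap S T (Ideal.Quotient.mk _ (F i))) = 0
    rw [this, map_zero, map_zero]

/-! ### Smooth algebras -/

open MvPolynomial in
/-- First order Taylor expansion: modulo `J ^ 2`, `f (a + δ) = f (a) + ∑ (∂ᵢ f) (a) δᵢ`. -/
lemma aeval_add_sub_mem_sq {B S ι : Type*} [CommRing B] [CommRing S] [Algebra B S] [Fintype ι]
    (J : Ideal S) (a δ : ι → S) (hδ : ∀ i, δ i ∈ J) (f : MvPolynomial ι B) :
    aeval (a + δ) f - aeval a f - ∑ i, aeval a (pderiv i f) * δ i ∈ J ^ 2 := by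
  classical
  induction f using MvPolynomial.induction_on with
  | C b => simp
  | add p q hp hq =>
    convert! add_mem hp hq using 1
    simp only [map_add, add_mul, Finset.sum_add_distrib]
    ring
  | mul_X p j hp =>
    have h1 : aeval (a + δ) p - aeval a p ∈ J := by
      have := add_mem (Ideal.pow_le_self two_ne_zero hp)
        (sum_mem (t := Finset.univ) fun i _ ↦ J.mul_mem_left (aeval a (pderiv i p)) (hδ i))
      simpa using this
    convert! add_mem (Ideal.mul_mem_left _ (a j) hp)
      (pow_two J ▸ Ideal.mul_mem_mul h1 (hδ j)) using 1
    have : ∑ i, aeval a (pderiv i (p * X j)) * δ i =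
        a j * ∑ i, aeval a (pderiv i p) * δ i + aeval a p * δ j := by
      simp only [Derivation.leibniz, pderiv_X, smul_eq_mul, map_add, map_mul, aeval_X, add_mul,
        Finset.sum_add_distrib, Finset.mul_sum, Pi.single_apply, apply_ite (aeval a), map_one,
        map_zero]
      rw [add_comm]
      congr 1
      · exact Finset.sum_congr rfl fun i _ ↦ by ring
      · simp
    rw [this]
    simp only [map_mul, aeval_X, Pi.add_apply]
    ring

lemma derivation_mem_of_mem_sq {B S : Type*} [CommRing B] [CommRing S] [Algebra B S]
    (D : Derivation B S S) (J : Ideal S) {x : S} (hx : x ∈ J ^ 2) : D x ∈ J := by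
  rw [pow_two] at hx
  induction hx using Submodule.mul_induction_on' with
  | mem_mul_mem m hm n hn =>
    rw [Derivation.leibniz]
    exact add_mem (J.mul_mem_right _ hm) (J.mul_mem_right _ hn)
  | add x _ y _ hx hy =>
    rw [map_add]
    exact add_mem hx hy

open MvPolynomial in
/-- The retraction `d f ↦ f` of the conormal sequence of a smooth algebra `A = B[X] / J`, given by
the images `r i` of `d X i`: one has `f ≡ ∑ (∂ᵢ f) rᵢ` modulo `J ^ 2` for all `f ∈ J`. -/
lemma exists_conormal_splitting {B A ι : Type*} [CommRing B] [CommRing A] [Algebra B A] [Fintype ι]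
    [Algebra.FormallySmooth B A] (π : MvPolynomial ι B →ₐ[B] A) (hπ : Function.Surjective π) :
    ∃ r : ι → MvPolynomial ι B, (∀ i, r i ∈ RingHom.ker π) ∧
      ∀ f ∈ RingHom.ker π, f - ∑ i, pderiv i f * r i ∈ RingHom.ker π ^ 2 := by
  obtain ⟨s, hs⟩ := (Algebra.FormallySmooth.iff_split_surjection π hπ).mp inferInstance
  have hs' : ∀ a, π.kerSquareLift (s a) = a := DFunLike.congr_fun hs
  choose r hr using fun i ↦ Ideal.Quotient.mk_surjective (s (π (X i)))
  have hrX : ∀ i, r i - X i ∈ RingHom.ker π := fun i ↦ by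
    have h1 : π.kerSquareLift (Ideal.Quotient.mk _ (r i)) = π (r i) := rfl
    rw [RingHom.mem_ker, map_sub, ← h1, hr, hs', sub_self]
  have hsπ : s.comp π = (Ideal.Quotient.mkₐ B _).comp (aeval r) := by
    ext i
    exact (hr i).symm.trans (congrArg (Ideal.Quotient.mk _) (aeval_X r i).symm)
  refine ⟨fun i ↦ X i - r i, fun i ↦ ?_, fun f hf ↦ ?_⟩
  · simpa using neg_mem (hrX i)
  · have h1 := aeval_add_sub_mem_sq (RingHom.ker π) X (fun i ↦ r i - X i) hrX f
    have h2 : aeval r f ∈ RingHom.ker π ^ 2 := by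
      refine Ideal.Quotient.eq_zero_iff_mem.mp ((DFunLike.congr_fun hsπ f).symm.trans ?_)
      exact (congrArg s (RingHom.mem_ker.mp hf)).trans (map_zero s)
    have h3 : X + (fun i ↦ r i - X i) = r := by ext1 i; simp
    rw [h3] at h1
    convert! sub_mem h2 h1 using 1
    simp only [aeval_X_left, AlgHom.id_apply]
    rw [sub_sub, sub_sub_cancel, sub_eq_add_neg, ← Finset.sum_neg_distrib]
    congr 1
    exact Finset.sum_congr rfl fun i _ ↦ by ring

open MvPolynomial in
/-- The lifting property for a smooth algebra over the base `B` of the henselian pair. -/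
lemma exists_lift_of_smooth {B A : Type*} [CommRing B] [CommRing A] [Algebra B A]
    [Algebra.Smooth B A] (I : Ideal B) [HenselianRing B I] (g : A →ₐ[B] B ⧸ I) :
    ∃ τ : A →ₐ[B] B, ∀ a, Ideal.Quotient.mk I (τ a) = g a := by
  obtain ⟨n, π, hπ, hfg⟩ := (inferInstance : Algebra.FinitePresentation B A).out
  obtain ⟨r, hrJ, hJ⟩ := exists_conormal_splitting π hπ
  have hfg' : (RingHom.ker π).FG := hfg
  set J := RingHom.ker π
  -- the matrix `E k j = ∂ⱼ r k` is a projector modulo `J`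
  have hE : ∀ k j, pderiv j (r k) - ∑ i, pderiv i (r k) * pderiv j (r i) ∈ J := by
    intro k j
    have h1 := derivation_mem_of_mem_sq (pderiv j) J (hJ _ (hrJ k))
    have h2 : ∑ i, r i * pderiv j (pderiv i (r k)) ∈ J :=
      sum_mem fun i _ ↦ J.mul_mem_right _ (hrJ i)
    convert! add_mem h1 h2 using 1
    simp only [map_sub, map_sum, Derivation.leibniz, smul_eq_mul, Finset.sum_add_distrib]
    ring
  choose b hb using fun j ↦ Ideal.Quotient.mk_surjective (g (π (X j)))
  have hlift : ∀ c : Fin n → B, (∀ i, Ideal.Quotient.mk I (c i) = Ideal.Quotient.mk I (b i)) →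
      ∀ f, Ideal.Quotient.mk I (eval c f) = g (π f) := by
    intro c hc f
    have : (Ideal.Quotient.mkₐ B I).comp (aeval c) = g.comp π := by
      ext i
      simpa [hc] using hb i
    rw [← aeval_eq_eval]
    exact DFunLike.congr_fun this f
  have hliftJ : ∀ c : Fin n → B, (∀ i, Ideal.Quotient.mk I (c i) = Ideal.Quotient.mk I (b i)) →
      ∀ f ∈ J, eval c f ∈ I := by
    intro c hc f hf
    rw [← Ideal.Quotient.eq_zero_iff_mem, hlift c hc, RingHom.mem_ker.mp hf, map_zero]
  -- `F = r + (1 - E) (X - b)` cuts out an étale neighbourhood: its Jacobian matrix at `b` is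
  -- `E (b) + (1 - E (b)) = 1`
  let F : Fin n → MvPolynomial (Fin n) B := fun i ↦
    r i + ∑ j, ((if i = j then 1 else 0) - pderiv j (r i)) * (X j - C (b j))
  have hFb : ∀ i, eval b (F i) ∈ I := fun i ↦ by
    simpa [F] using hliftJ b (fun _ ↦ rfl) _ (hrJ i)
  have hdF : ∀ i j, eval b (pderiv i (F j)) = (1 : Matrix (Fin n) (Fin n) B) i j := fun i j ↦ by
    have h1 : ∀ k, eval b (pderiv i (X k)) - eval b (pderiv i (C (b k))) =
        if k = i then 1 else 0 := fun k ↦ by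
      simp [pderiv_X, Pi.single_apply, apply_ite (eval b)]
    simp only [F, map_add, map_sum, Derivation.leibniz, smul_eq_mul, map_mul, h1, map_sub, eval_X,
      eval_C, sub_self, zero_mul, add_zero, mul_ite, mul_one, mul_zero, Finset.sum_ite_eq',
      Finset.mem_univ, if_true, apply_ite (eval b), map_one, map_zero, add_sub_cancel,
      Matrix.one_apply, eq_comm (a := i)]
  obtain ⟨c, hcb, hc⟩ := exists_root_of_isUnit_jacobian I F b hFb (by
    rw [RingHom.map_det]
    convert! isUnit_one
    refine (congrArg Matrix.det ?_).trans Matrix.det_one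
    ext i j
    exact hdF i j)
  let 𝔧 := J.map (eval c)
  have h𝔧I : 𝔧 ≤ I := Ideal.map_le_iff_le_comap.mpr (hliftJ c hcb)
  have hmem : ∀ f ∈ J, eval c f ∈ 𝔧 := fun f hf ↦ Ideal.mem_map_of_mem _ hf
  have hsq : ∀ f ∈ J ^ 2, eval c f ∈ I * 𝔧 := fun f hf ↦ by
    have := Ideal.mem_map_of_mem (eval c) hf
    rw [Ideal.map_pow, pow_two] at this
    exact Ideal.mul_mono_left h𝔧I this
  -- multiply `F (c) = 0` by `E (c)`; as `E ^ 2 ≡ E` and `E r ≡ r`, this leaves `r (c) ≡ 0`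
  have hr : ∀ k, eval c (r k) ∈ I * 𝔧 := by
    intro k
    have h1 := hsq _ (hJ _ (hrJ k))
    have h2 : ∑ j, (c j - b j) * eval c (pderiv j (r k) - ∑ i, pderiv i (r k) * pderiv j (r i)) ∈
        I * 𝔧 := sum_mem fun j _ ↦
      Ideal.mul_mem_mul (Ideal.Quotient.eq.mp (hcb j)) (hmem _ (hE k j))
    have h3 : ∑ i, eval c (pderiv i (r k)) * eval c (F i) = 0 := by simp [hc]
    have h4 : ∑ i, eval c (pderiv i (r k)) * eval c (F i) =
        ∑ i, eval c (pderiv i (r k)) * eval c (r i) +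
        ∑ j, (c j - b j) * eval c (pderiv j (r k) - ∑ i, pderiv i (r k) * pderiv j (r i)) := by
      simp only [F, map_add, map_sum, map_mul, map_sub, eval_X, eval_C, mul_add,
        Finset.sum_add_distrib]
      congr 1
      simp only [Finset.mul_sum]
      rw [Finset.sum_comm]
      refine Finset.sum_congr rfl fun j _ ↦ ?_
      trans (c j - b j) * ∑ i, eval c (pderiv i (r k)) *
          ((if i = j then 1 else 0) - eval c (pderiv j (r i)))
      · rw [Finset.mul_sum]
        exact Finset.sum_congr rfl fun i _ ↦ by
          simp only [apply_ite (eval c), map_one, map_zero]; ring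
      · simp [mul_sub]
    convert! sub_mem h1 h2 using 1
    simp only [map_sub, map_sum, map_mul] at h3 h4 ⊢
    linear_combination h3 - h4
  have h𝔧 : 𝔧 = ⊥ := by
    refine Submodule.eq_bot_of_le_smul_of_le_jacobson_bot I 𝔧 (hfg'.map _) ?_ HenselianRing.jac
    refine Ideal.map_le_iff_le_comap.mpr fun f hf ↦ ?_
    have h1 := hsq _ (hJ f hf)
    have h2 : ∑ i, eval c (pderiv i f) * eval c (r i) ∈ I * 𝔧 :=
      sum_mem fun i _ ↦ Ideal.mul_mem_left _ _ (hr i)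
    have := add_mem h1 h2
    simpa using this
  have h0 : ∀ f ∈ RingHom.ker π, (aeval c : _ →ₐ[B] B) f = 0 := fun f hf ↦ by
    rw [aeval_eq_eval]
    exact (Submodule.mem_bot B).mp (h𝔧 ▸ hmem f hf)
  let ψ := Ideal.quotientKerAlgEquivOfSurjective hπ
  refine ⟨(Ideal.Quotient.liftₐ _ _ h0).comp ψ.symm.toAlgHom, fun a ↦ ?_⟩
  obtain ⟨f, rfl⟩ := hπ a
  have : ψ.symm (π f) = Ideal.Quotient.mk _ f := by
    rw [AlgEquiv.symm_apply_eq]; rfl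
  rw [← hlift c hcb, ← aeval_eq_eval]
  congr 1
  exact congrArg (Ideal.Quotient.liftₐ _ _ h0) this

/-- A smooth (affine) algebra satisfies the lifting property with respect to henselian pairs:
for every henselian pair `(B, I)` of `R`-algebras, every `R`-algebra map `A → B/I` lifts to
`A → B`. -/
theorem smooth_lifts_along_henselian_pairs (R A : Type u) [CommRing R] [CommRing A]
    [Algebra R A] [Algebra.Smooth R A] (B : Type u) [CommRing B] [Algebra R B]
    (I : Ideal B) [HenselianRing B I] (g : A →ₐ[R] B ⧸ I) :
    ∃ g' : A →ₐ[R] B, (Ideal.Quotient.mkₐ R I).comp g' = g := by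
  -- base change to `B`
  obtain ⟨τ, hτ⟩ := exists_lift_of_smooth (A := TensorProduct R B A) I
    (Algebra.TensorProduct.lift (Algebra.ofId B (B ⧸ I)) g fun _ _ ↦ Commute.all _ _)
  refine ⟨(τ.restrictScalars R).comp Algebra.TensorProduct.includeRight, ?_⟩
  ext a
  simpa using hτ (1 ⊗ₜ[R] a)
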